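/- Assume σ1 = τ1, σ2 = τ2, and σ3 = τ3 (then automatically σ4 ≠ τ4 since the αi and βj are pairwise distinct). Then the projective curve F = 0 has no singular point of the form (x:0:1), and Sing = {(0:1:0), (1:0:0)} has exactly 2 elements. -/

import Mathlib

open MvPolynomial

/-!
Put `P = φ₁`, `Q = φ₂`. Equality of the first three elementary symmetric polynomials means that
`P - Q` is a constant `c`, nonzero since `P` and `Q` have no common root; in particular `P' = Q'`.
At an affine singular point of `f = y⁴ - 2 (P + Q) y² + c²` we have `y ≠ 0`, since otherwise
`c² = 0`. Hence `f_y = 0` gives `y² = P + Q`, so that `f = (y² - P - Q)² - 4 P Q` yields `P Q = 0`,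
while `f_x = -4 P' y²` gives `P' = Q' = 0`, contradicting that `P` and `Q` have simple roots.

On the line `z = 0` the form `F` restricts to `-4 x⁴ y²`, so only `(0:1:0)` and `(1:0:0)` can be
singular; they are, because each term of `F = y⁴ z² - 2 (P + Q)ʰ y² + c² z⁶` lies in the square
of the ideal of each of these points.
-/

section Homogeneous

variable {σ R A : Type*}

lemma aeval_smul_of_isHomogeneous [CommSemiring R] [CommSemiring A] [Algebra R A]
    {F : MvPolynomial σ R} {n : ℕ} (hF : F.IsHomogeneous n) (a : A) (v : σ → A) :
    aeval (a • v) F = a ^ n * aeval v F := by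
  simp only [aeval_def, eval₂_eq, Finset.mul_sum]
  refine Finset.sum_congr rfl fun d hd ↦ ?_
  simp only [Pi.smul_apply, smul_eq_mul, mul_pow, Finset.prod_mul_distrib,
    Finset.prod_pow_eq_pow_sum]
  rw [hF.degree_eq_sum_deg_support hd]
  ring

lemma aeval_mem_pow_of_isHomogeneous [CommSemiring R] [CommSemiring A] [Algebra R A]
    {F : MvPolynomial σ R} {n : ℕ} (hF : F.IsHomogeneous n) {I : Ideal A} {v : σ → A}
    (hv : ∀ i, v i ∈ I) : aeval v F ∈ I ^ n := by
  rw [aeval_def, eval₂_eq]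
  refine Ideal.sum_mem _ fun d hd ↦ Ideal.mul_mem_left _ _ ?_
  rw [hF.degree_eq_sum_deg_support hd, ← Finset.prod_pow_eq_pow_sum]
  exact Ideal.prod_mem_prod fun i _ ↦ Ideal.pow_mem_pow (hv i) _

end Homogeneous

section Singular

variable {σ R : Type*} [CommSemiring R]

/-- `v` is a singular zero of `F`. -/
def IsSingularPoint (F : MvPolynomial σ R) (v : σ → R) : Prop :=
  eval v F = 0 ∧ ∀ i, eval v (pderiv i F) = 0

lemma isSingularPoint_of_mem_ker_sq {F : MvPolynomial σ R} {v : σ → R}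
    (hF : F ∈ RingHom.ker (eval v) ^ 2) : IsSingularPoint F v := by
  rw [pow_two] at hF
  induction hF using Submodule.mul_induction_on' with
  | mem_mul_mem G hG H hH =>
    rw [RingHom.mem_ker] at hG hH
    simp [IsSingularPoint, hG, hH]
  | add G _ H _ hG hH =>
    exact ⟨by simp [hG.1, hH.1], fun i ↦ by simp [hG.2 i, hH.2 i]⟩

lemma isSingularPoint_smul_iff [NoZeroDivisors R] {F : MvPolynomial σ R} {n : ℕ}
    (hF : F.IsHomogeneous n) {a : R} (ha : a ≠ 0) (v : σ → R) :
    IsSingularPoint F (a • v) ↔ IsSingularPoint F v := by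
  have eval_eq_zero_iff {m : ℕ} {G : MvPolynomial σ R} (hG : G.IsHomogeneous m) :
      eval (a • v) G = 0 ↔ eval v G = 0 := by
    simp only [← aeval_eq_eval, aeval_smul_of_isHomogeneous hG,
      mul_eq_zero_iff_left (pow_ne_zero m ha)]
  simp only [IsSingularPoint, eval_eq_zero_iff hF, eval_eq_zero_iff hF.pderiv]

open scoped LinearAlgebra.Projectivization

/-- The set of `k`-rational singular points of the projective hypersurface `F = 0`. It is meant for
homogeneous `F`, for which the choice of representative in `Projectivization.rep` is immaterial. -/
def singularPoints {k : Type*} [Field k] (F : MvPolynomial σ k) : Set (ℙ k (σ → k)) :=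
  {P | IsSingularPoint F P.rep}

lemma mk_mem_singularPoints_iff {k : Type*} [Field k] {F : MvPolynomial σ k} {n : ℕ}
    (hF : F.IsHomogeneous n) {v : σ → k} (hv : v ≠ 0) :
    Projectivization.mk k v hv ∈ singularPoints F ↔ IsSingularPoint F v := by
  obtain ⟨a, ha⟩ := Projectivization.exists_smul_eq_mk_rep k v hv
  rw [singularPoints, Set.mem_ofPred_eq, ← ha]
  exact isSingularPoint_smul_iff hF a.ne_zero v

end Singular

section Dehomogenize

variable {R : Type*} [CommSemiring R] {m : ℕ}

/-- Restriction of a polynomial in `m + 1` variables to the affine chart where the last one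
equals `1`. -/
noncomputable def dehomogenize : MvPolynomial (Fin (m + 1)) R →ₐ[R] MvPolynomial (Fin m) R :=
  aeval (Fin.snoc (α := fun _ ↦ MvPolynomial (Fin m) R) X 1)

lemma aeval_dehomogenize {A : Type*} [CommSemiring A] [Algebra R A] (v : Fin m → A)
    (F : MvPolynomial (Fin (m + 1)) R) :
    aeval v (dehomogenize F) = aeval (Fin.snoc (α := fun _ ↦ A) v 1) F := by
  rw [dehomogenize, ← AlgHom.comp_apply, comp_aeval]
  congr 2
  refine funext (Fin.lastCases ?_ fun i ↦ ?_) <;> simp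

lemma dehomogenize_fin_three (F : MvPolynomial (Fin 3) R) :
    dehomogenize F = aeval ![(X 0 : MvPolynomial (Fin 2) R), X 1, 1] F := by
  rw [dehomogenize]
  congr 2
  ext1 i
  fin_cases i <;> rfl

lemma pderiv_dehomogenize (i : Fin m) (F : MvPolynomial (Fin (m + 1)) R) :
    pderiv i (dehomogenize F) = dehomogenize (pderiv i.castSucc F) := by
  induction F using MvPolynomial.induction_on with
  | C a => simp [dehomogenize]
  | add F G hF hG => simp [hF, hG]
  | mul_X F j hF =>
    have hX : pderiv i (dehomogenize (X j : MvPolynomial (Fin (m + 1)) R)) =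
        dehomogenize (pderiv i.castSucc (X j)) := by
      cases j using Fin.lastCases with
      | last => simp [dehomogenize, pderiv_X_of_ne (Fin.castSucc_ne_last i).symm]
      | cast j => by_cases hij : j = i <;> simp [dehomogenize, pderiv_X, hij]
    rw [map_mul, pderiv_mul, pderiv_mul, map_add, map_mul, map_mul, hF, hX]

lemma isSingularPoint_dehomogenize {F : MvPolynomial (Fin (m + 1)) R} {v : Fin m → R}
    (h : IsSingularPoint F (Fin.snoc (α := fun _ ↦ R) v 1)) :
    IsSingularPoint (dehomogenize F) v := by
  simp only [IsSingularPoint, pderiv_dehomogenize, ← aeval_eq_eval, aeval_dehomogenize] at h ⊢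
  exact ⟨h.1, fun i ↦ h.2 i.castSucc⟩

lemma eq_smul_snoc_div {K : Type*} [Field K] {v : Fin (m + 1) → K} (hv : v (Fin.last m) ≠ 0) :
    v = v (Fin.last m) •
      Fin.snoc (α := fun _ ↦ K) (fun i ↦ v i.castSucc / v (Fin.last m)) 1 := by
  refine funext (Fin.lastCases ?_ fun i ↦ ?_) <;> simp [mul_div_cancel₀, hv]

lemma isSingularPoint_dehomogenize_of_last_ne_zero {K : Type*} [Field K]
    {F : MvPolynomial (Fin (m + 1)) K} {n : ℕ} (hF : F.IsHomogeneous n) {v : Fin (m + 1) → K}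
    (h : IsSingularPoint F v) (hv : v (Fin.last m) ≠ 0) :
    IsSingularPoint (dehomogenize F) fun i ↦ v i.castSucc / v (Fin.last m) := by
  rw [eq_smul_snoc_div hv, isSingularPoint_smul_iff hF hv] at h
  exact isSingularPoint_dehomogenize h

lemma dehomogenize_injOn {R : Type*} [CommRing R] [IsDomain R] (n : ℕ) :
    Set.InjOn dehomogenize {F : MvPolynomial (Fin (m + 1)) R | F.IsHomogeneous n} := by
  let K := FractionRing (MvPolynomial (Fin (m + 1)) R)
  let x : Fin (m + 1) → K := fun i ↦ algebraMap (MvPolynomial (Fin (m + 1)) R) K (X i)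
  let u : Fin m → K := fun i ↦ x i.castSucc / x (Fin.last m)
  have hlast : x (Fin.last m) ≠ 0 := by simp [x]
  have hx : x = x (Fin.last m) • Fin.snoc (α := fun _ ↦ K) u 1 := eq_smul_snoc_div hlast
  have algebraMap_eq {F : MvPolynomial (Fin (m + 1)) R} (hF : F.IsHomogeneous n) :
      algebraMap (MvPolynomial (Fin (m + 1)) R) K F =
        x (Fin.last m) ^ n * aeval u (dehomogenize F) := by
    calc
      algebraMap _ K F = aeval x F := by
        rw [show x = algebraMap _ K ∘ X from rfl, aeval_algebraMap_apply, aeval_X_left_apply]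
      _ = x (Fin.last m) ^ n * aeval u (dehomogenize F) := by
        rw [hx, aeval_smul_of_isHomogeneous hF, ← hx, aeval_dehomogenize]
  intro F hF G hG h
  apply IsFractionRing.injective (MvPolynomial (Fin (m + 1)) R) K
  rw [algebraMap_eq hF, algebraMap_eq hG, h]

end Dehomogenize

section Biquadratic

variable {R k : Type*} [CommRing R] [Field k]

/-- The polynomial `y⁴ - 2 (P(x) + Q(x)) y² + (P(x) - Q(x))²` in the coordinates `x = X 0`,
`y = X 1`. Its roots in `y` are `±√P(x) ± √Q(x)`. -/
noncomputable def biquadratic (P Q : Polynomial R) : MvPolynomial (Fin 2) R :=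
  X 1 ^ 4 - C 2 * (Polynomial.aeval (X 0) P + Polynomial.aeval (X 0) Q) * X 1 ^ 2 +
    (Polynomial.aeval (X 0) P - Polynomial.aeval (X 0) Q) ^ 2

/-- The form `y⁴ zᵉ - 2 S(x, z) y² + c² zᵉ⁺⁴` of degree `e + 4` in the coordinates `x = X 0`,
`y = X 1`, `z = X 2`, where `S(x, z)` is the homogenization of `S` in degree `e + 2`.
It homogenizes `biquadratic P Q` when `P + Q = S` and `P - Q = c`. -/
noncomputable def biquadraticForm (S : Polynomial R) (c : R) (e : ℕ) : MvPolynomial (Fin 3) R :=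
  X 1 ^ 4 * X 2 ^ e - C 2 * rename ![0, 2] (S.homogenize (e + 2)) * X 1 ^ 2 +
    C (c ^ 2) * X 2 ^ (e + 4)

lemma eval_aeval_X {σ R : Type*} [CommSemiring R] (v : σ → R) (i : σ) (P : Polynomial R) :
    eval v (Polynomial.aeval (X i) P) = P.eval (v i) := by
  rw [← aeval_eq_eval, ← Polynomial.aeval_algHom_apply, aeval_X, Polynomial.coe_aeval_eq_eval]

lemma eval_biquadratic (P Q : Polynomial R) (v : Fin 2 → R) :
    eval v (biquadratic P Q) = v 1 ^ 4 - 2 * (P.eval (v 0) + Q.eval (v 0)) * v 1 ^ 2 +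
      (P.eval (v 0) - Q.eval (v 0)) ^ 2 := by
  simp [biquadratic, eval_aeval_X]

lemma eval_pderiv_zero_biquadratic (P Q : Polynomial R) (v : Fin 2 → R) :
    eval v (pderiv 0 (biquadratic P Q)) =
      2 * (P.eval (v 0) - Q.eval (v 0)) * (P.derivative.eval (v 0) - Q.derivative.eval (v 0)) -
        2 * (P.derivative.eval (v 0) + Q.derivative.eval (v 0)) * v 1 ^ 2 := by
  simp only [biquadratic, map_add, map_sub, map_mul, map_pow, pderiv_mul, pderiv_pow, pderiv_C,
    Derivation.map_aeval, pderiv_X_self, pderiv_X_of_ne (one_ne_zero (α := Fin 2)), smul_eq_mul,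
    eval_aeval_X, eval_X, eval_C, map_zero, map_one, Nat.cast_ofNat, eval_ofNat]
  ring

lemma eval_pderiv_one_biquadratic (P Q : Polynomial R) (v : Fin 2 → R) :
    eval v (pderiv 1 (biquadratic P Q)) =
      2 ^ 2 * v 1 * (v 1 ^ 2 - (P.eval (v 0) + Q.eval (v 0))) := by
  simp only [biquadratic, map_add, map_sub, map_mul, map_pow, pderiv_mul, pderiv_pow, pderiv_C,
    Derivation.map_aeval, pderiv_X_self, pderiv_X_of_ne (zero_ne_one (α := Fin 2)), smul_eq_mul,
    eval_aeval_X, eval_X, eval_C, map_zero, map_one, Nat.cast_ofNat, eval_ofNat]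
  ring

lemma not_isSingularPoint_biquadratic (h2 : (2 : k) ≠ 0) {P Q : Polynomial k} (hP : P.Separable)
    (hQ : Q.Separable) {c : k} (hc : c ≠ 0) (hPQ : P - Q = .C c) (v : Fin 2 → k) :
    ¬ IsSingularPoint (biquadratic P Q) v := by
  rintro ⟨hf, hd⟩
  have hder : Q.derivative = P.derivative := by
    rw [eq_comm, ← sub_eq_zero, ← Polynomial.derivative_sub, hPQ, Polynomial.derivative_C]
  have hdiff : P.eval (v 0) - Q.eval (v 0) = c := by
    rw [← Polynomial.eval_sub, hPQ, Polynomial.eval_C]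
  have hx := hd 0
  have hy := hd 1
  rw [eval_biquadratic, hdiff] at hf
  rw [eval_pderiv_zero_biquadratic, hder] at hx
  rw [eval_pderiv_one_biquadratic] at hy
  have hv1 : v 1 ≠ 0 := fun h ↦ hc (by simpa [h] using hf)
  have hsq : v 1 ^ 2 - (P.eval (v 0) + Q.eval (v 0)) = 0 := by simpa [h2, hv1] using hy
  have hder_zero : P.derivative.eval (v 0) = 0 := by
    have : 2 ^ 2 * v 1 ^ 2 * P.derivative.eval (v 0) = 0 := by linear_combination -hx
    simpa [h2, hv1] using this
  have hprod : P.eval (v 0) * Q.eval (v 0) = 0 := by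
    have : 2 ^ 2 * (P.eval (v 0) * Q.eval (v 0)) = 0 := by
      rw [← hdiff] at hf
      linear_combination (v 1 ^ 2 - (P.eval (v 0) + Q.eval (v 0))) * hsq - hf
    simpa [h2] using this
  rcases mul_eq_zero.1 hprod with h | h
  · exact hP.eval₂_derivative_ne_zero (.id k) h hder_zero
  · exact hQ.eval₂_derivative_ne_zero (.id k) h (hder ▸ hder_zero)

lemma isHomogeneous_biquadraticForm (S : Polynomial R) (c : R) (e : ℕ) :
    (biquadraticForm S c e).IsHomogeneous (e + 4) := by
  have hy : (X 1 ^ 4 * X 2 ^ e : MvPolynomial (Fin 3) R).IsHomogeneous (e + 4) := by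
    simpa [add_comm] using (isHomogeneous_X_pow 1 4).mul (isHomogeneous_X_pow 2 e)
  have hS : (C 2 * rename ![0, 2] (S.homogenize (e + 2)) * X 1 ^ 2 :
      MvPolynomial (Fin 3) R).IsHomogeneous (e + 4) :=
    ((S.isHomogeneous_homogenize.rename_isHomogeneous).C_mul 2).mul (isHomogeneous_X_pow 1 2)
  exact (hy.sub hS).add (isHomogeneous_C_mul_X_pow _ 2 (e + 4))

lemma dehomogenize_biquadraticForm {P Q : Polynomial R} {c : R} (hPQ : P - Q = .C c) {e : ℕ}
    (hdeg : (P + Q).natDegree ≤ e + 2) :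
    dehomogenize (biquadraticForm (P + Q) c e) = biquadratic P Q := by
  have hS : dehomogenize (rename ![0, 2] ((P + Q).homogenize (e + 2))) =
      Polynomial.aeval (X 0 : MvPolynomial (Fin 2) R) (P + Q) := by
    rw [dehomogenize, aeval_rename, Polynomial.aeval_homogenize_of_eq_one hdeg _ (by rfl)]
    rfl
  have hc : Polynomial.aeval (X 0 : MvPolynomial (Fin 2) R) P - Polynomial.aeval (X 0) Q =
      C c := by
    rw [← map_sub, hPQ, Polynomial.aeval_C, algebraMap_eq]
  have h1 : dehomogenize (X 1 : MvPolynomial (Fin 3) R) = X 1 := by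
    rw [dehomogenize, aeval_X]; rfl
  have h2 : dehomogenize (X 2 : MvPolynomial (Fin 3) R) = 1 := by
    rw [dehomogenize, aeval_X]; rfl
  have hC (r : R) : dehomogenize (C r : MvPolynomial (Fin 3) R) = C r := by
    rw [dehomogenize, aeval_C, algebraMap_eq]
  simp only [biquadraticForm, biquadratic, map_add, map_sub, map_mul, map_pow, h1, h2, hC, hc]
  rw [hS, map_add, one_pow, one_pow, mul_one, mul_one]

lemma eval_homogenize_of_eq_zero {R : Type*} [CommSemiring R] (S : Polynomial R) (n : ℕ)
    {v : Fin 2 → R} (hv : v 1 = 0) :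
    eval v (S.homogenize n) = S.coeff n * v 0 ^ n := by
  rw [Polynomial.homogenize, map_sum, Finset.sum_eq_single (n, 0)]
  · simp [eval_monomial]
  · rintro ⟨i, j⟩ hij hne
    have hj : j ≠ 0 := by
      rintro rfl
      simp_all
    simp [eval_monomial, hv, hj]
  · simp

lemma eval_biquadraticForm_of_eq_zero (S : Polynomial R) (c : R) {e : ℕ} (he : e ≠ 0)
    {v : Fin 3 → R} (hv : v 2 = 0) :
    eval v (biquadraticForm S c e) = -2 * S.coeff (e + 2) * v 0 ^ (e + 2) * v 1 ^ 2 := by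
  have hS : eval v (rename ![0, 2] (S.homogenize (e + 2))) = S.coeff (e + 2) * v 0 ^ (e + 2) := by
    rw [eval_rename, eval_homogenize_of_eq_zero S (e + 2) (by simpa using hv)]
    rfl
  simp only [biquadraticForm, map_add, map_sub, map_mul, map_pow, eval_X, eval_C, hS, hv,
    zero_pow he, zero_pow (Nat.add_eq_zero_iff.not.2 fun h ↦ he h.1)]
  ring

lemma isSingularPoint_biquadraticForm_of_eq_zero (S : Polynomial R) (c : R) {e : ℕ} (he : 2 ≤ e)
    {v : Fin 3 → R} (hz : v 2 = 0) (hxy : v 0 = 0 ∨ v 1 = 0) :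
    IsSingularPoint (biquadraticForm S c e) v := by
  apply isSingularPoint_of_mem_ker_sq
  let I := RingHom.ker (eval v)
  have mem_of_eq_zero {i : Fin 3} (hi : v i = 0) : X i ∈ I := by simp [I, RingHom.mem_ker, hi]
  have hzn {n : ℕ} (hn : 2 ≤ n) : X 2 ^ n ∈ I ^ 2 :=
    Ideal.pow_le_pow_right hn (Ideal.pow_mem_pow (mem_of_eq_zero hz) n)
  refine add_mem (sub_mem (Ideal.mul_mem_left _ _ (hzn he)) ?_)
    (Ideal.mul_mem_left _ _ (hzn (by omega)))
  rcases hxy with hx | hy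
  · refine Ideal.mul_mem_right _ _ (Ideal.mul_mem_left _ _ ?_)
    rw [rename_eq_aeval]
    refine Ideal.pow_le_pow_right (show 2 ≤ e + 2 by omega)
      (aeval_mem_pow_of_isHomogeneous S.isHomogeneous_homogenize fun i ↦ ?_)
    fin_cases i
    exacts [mem_of_eq_zero hx, mem_of_eq_zero hz]
  · exact Ideal.mul_mem_left _ _ (Ideal.pow_mem_pow (mem_of_eq_zero hy) 2)

lemma isSingularPoint_iff_of_dehomogenize_eq_biquadratic (h2 : (2 : k) ≠ 0) {P Q : Polynomial k}
    (hP : P.Separable) (hQ : Q.Separable) {c : k} (hc : c ≠ 0) (hPQ : P - Q = .C c) {e : ℕ}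
    (he : 2 ≤ e) (hdeg : P.natDegree = e + 2) {F : MvPolynomial (Fin 3) k}
    (hF : F.IsHomogeneous (e + 4)) (hFf : dehomogenize F = biquadratic P Q) (v : Fin 3 → k) :
    IsSingularPoint F v ↔ v 2 = 0 ∧ (v 0 = 0 ∨ v 1 = 0) := by
  have hadd : P + Q = .C 2 * P - .C c := by
    rw [← hPQ, Polynomial.C_ofNat]
    ring
  have hcoeff : (P + Q).coeff (e + 2) ≠ 0 := by
    have hP0 : P.coeff (e + 2) ≠ 0 := by
      rw [← hdeg, Polynomial.coeff_natDegree]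
      exact Polynomial.leadingCoeff_ne_zero.2 hP.ne_zero
    simp [hadd, h2, hP0]
  have hform : F = biquadraticForm (P + Q) c e := by
    refine dehomogenize_injOn (e + 4) hF (isHomogeneous_biquadraticForm _ _ _) ?_
    rw [hFf, dehomogenize_biquadraticForm hPQ]
    rw [hadd, Polynomial.natDegree_sub_C]
    exact (Polynomial.natDegree_C_mul_le _ _).trans hdeg.le
  refine ⟨fun h ↦ ?_, fun h ↦ hform ▸ isSingularPoint_biquadraticForm_of_eq_zero _ _ he h.1 h.2⟩
  have hz : v 2 = 0 := by
    by_contra hz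
    have hsing := isSingularPoint_dehomogenize_of_last_ne_zero hF h hz
    rw [hFf] at hsing
    exact not_isSingularPoint_biquadratic h2 hP hQ hc hPQ _ hsing
  have heval := h.1
  rw [hform, eval_biquadraticForm_of_eq_zero _ _ (by omega) hz] at heval
  exact ⟨hz, by simpa [-Polynomial.coeff_add, h2, hcoeff] using heval⟩

end Biquadratic

section ProjectivePlane

open scoped LinearAlgebra.Projectivization

variable {k : Type*} [Field k]

lemma eq_mk_pair_of_forall_mem_iff {S : Set (ℙ k (Fin 3 → k))}
    (hS : ∀ (v : Fin 3 → k) (hv : v ≠ 0),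
      Projectivization.mk k v hv ∈ S ↔ v 2 = 0 ∧ (v 0 = 0 ∨ v 1 = 0)) :
    S = {Projectivization.mk k ![0, 1, 0] (by simp),
      Projectivization.mk k ![1, 0, 0] (by simp)} := by
  ext P
  induction P using Projectivization.ind with | h v hv
  rw [hS, Set.mem_insert_iff, Set.mem_singleton_iff, Projectivization.mk_eq_mk_iff',
    Projectivization.mk_eq_mk_iff']
  constructor
  · rintro ⟨hz, hx | hy⟩
    · exact .inl ⟨v 1, by ext i; fin_cases i <;> simp [hx, hz]⟩
    · exact .inr ⟨v 0, by ext i; fin_cases i <;> simp [hy, hz]⟩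
  · rintro (⟨a, rfl⟩ | ⟨a, rfl⟩) <;> simp

lemma mk_zero_one_zero_ne_mk_one_zero_zero :
    Projectivization.mk k ![(0 : k), 1, 0] (by simp) ≠
      Projectivization.mk k ![(1 : k), 0, 0] (by simp) := by
  rw [Ne, Projectivization.mk_eq_mk_iff']
  rintro ⟨a, ha⟩
  simpa using congrFun ha 1

end ProjectivePlane

section Quartic

variable {R k : Type*} [CommRing R] [Field k]

/-- The monic quartic with roots `a 0, a 1, a 2, a 3`. -/
noncomputable def quartic (a : Fin 4 → R) : Polynomial R := ∏ i, (.X - .C (a i))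

lemma quartic_sub_quartic_eq_C {a1 a2 a3 a4 b1 b2 b3 b4 : R}
    (h1 : a1 + a2 + a3 + a4 = b1 + b2 + b3 + b4)
    (h2 : a1 * a2 + a1 * a3 + a1 * a4 + a2 * a3 + a2 * a4 + a3 * a4 =
      b1 * b2 + b1 * b3 + b1 * b4 + b2 * b3 + b2 * b4 + b3 * b4)
    (h3 : a1 * a2 * a3 + a1 * a2 * a4 + a1 * a3 * a4 + a2 * a3 * a4 =
      b1 * b2 * b3 + b1 * b2 * b4 + b1 * b3 * b4 + b2 * b3 * b4) :
    quartic ![a1, a2, a3, a4] - quartic ![b1, b2, b3, b4] =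
      .C (a1 * a2 * a3 * a4 - b1 * b2 * b3 * b4) := by
  replace h1 := congrArg Polynomial.C h1
  replace h2 := congrArg Polynomial.C h2
  replace h3 := congrArg Polynomial.C h3
  simp only [map_add, map_mul] at h1 h2 h3
  simp only [quartic, Fin.prod_univ_four, Matrix.cons_val, map_sub, map_mul]
  linear_combination -Polynomial.X ^ 3 * h1 + Polynomial.X ^ 2 * h2 - Polynomial.X * h3

lemma natDegree_quartic [Nontrivial R] (a : Fin 4 → R) : (quartic a).natDegree = 4 := by
  rw [quartic, Polynomial.natDegree_prod_of_monic _ _ fun i _ ↦ Polynomial.monic_X_sub_C _]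
  simp

lemma separable_quartic {a : Fin 4 → k} (ha : Function.Injective a) : (quartic a).Separable :=
  Polynomial.separable_prod_X_sub_C_iff.2 ha

lemma aeval_quartic {A : Type*} [CommRing A] [Algebra R A] (x : A) (a1 a2 a3 a4 : R) :
    Polynomial.aeval x (quartic ![a1, a2, a3, a4]) =
      (x - algebraMap R A a1) * (x - algebraMap R A a2) * (x - algebraMap R A a3) *
        (x - algebraMap R A a4) := by
  simp [quartic, Fin.prod_univ_four]

lemma eval_quartic_eq_zero_iff [IsDomain R] (a : Fin 4 → R) (x : R) :
    (quartic a).eval x = 0 ↔ ∃ i, x = a i := by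
  simp [quartic, Polynomial.eval_prod, Finset.prod_eq_zero_iff, sub_eq_zero]

lemma quartic_ne_quartic [IsDomain R] {a b : Fin 4 → R} {i : Fin 4} (h : ∀ j, a i ≠ b j) :
    quartic a ≠ quartic b := by
  intro hab
  have hroot := (eval_quartic_eq_zero_iff a (a i)).2 ⟨i, rfl⟩
  rw [hab, eval_quartic_eq_zero_iff] at hroot
  exact hroot.elim h

end Quartic

theorem stmt_18_general
    {k : Type*} [Field k] (h2 : (2 : k) ≠ 0)
    {α1 α2 α3 α4 β1 β2 β3 β4 : k}
    (hdist : ([α1, α2, α3, α4, β1, β2, β3, β4] : List k).Pairwise (· ≠ ·))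
    {σ1 σ2 σ3 σ4 τ1 τ2 τ3 τ4 : k}
    (hσ1 : σ1 = α1 + α2 + α3 + α4)
    (hσ2 : σ2 = α1 * α2 + α1 * α3 + α1 * α4 + α2 * α3 + α2 * α4 + α3 * α4)
    (hσ3 : σ3 = α1 * α2 * α3 + α1 * α2 * α4 + α1 * α3 * α4 + α2 * α3 * α4)
    (hσ4 : σ4 = α1 * α2 * α3 * α4)
    (hτ1 : τ1 = β1 + β2 + β3 + β4)
    (hτ2 : τ2 = β1 * β2 + β1 * β3 + β1 * β4 + β2 * β3 + β2 * β4 + β3 * β4)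
    (hτ3 : τ3 = β1 * β2 * β3 + β1 * β2 * β4 + β1 * β3 * β4 + β2 * β3 * β4)
    (hτ4 : τ4 = β1 * β2 * β3 * β4)
    {φ1 φ2 f : MvPolynomial (Fin 2) k}
    (hφ1 : φ1 = (X 0 - C α1) * (X 0 - C α2) * (X 0 - C α3) * (X 0 - C α4))
    (hφ2 : φ2 = (X 0 - C β1) * (X 0 - C β2) * (X 0 - C β3) * (X 0 - C β4))
    (hf : f = X 1 ^ 4 - C 2 * (φ1 + φ2) * X 1 ^ 2 + (φ1 - φ2) ^ 2)
    {F : MvPolynomial (Fin 3) k} (hFhom : F.IsHomogeneous 6)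
    (hFf : aeval ![(X 0 : MvPolynomial (Fin 2) k), X 1, 1] F = f)
    {Sing : Set (Projectivization k (Fin 3 → k))}
    (hSing : ∀ P : Projectivization k (Fin 3 → k),
      P ∈ Sing ↔ (eval P.rep F = 0 ∧
        eval P.rep (pderiv 0 F) = 0 ∧
        eval P.rep (pderiv 1 F) = 0 ∧
        eval P.rep (pderiv 2 F) = 0))
    (hστ1 : σ1 = τ1) (hστ2 : σ2 = τ2) (hστ3 : σ3 = τ3) :
    σ4 ≠ τ4
    ∧ (∀ ξ : k, Projectivization.mk k ![ξ, 0, 1] (by simp) ∉ Sing)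
    ∧ Sing = {Projectivization.mk k ![0, 1, 0] (by simp),
        Projectivization.mk k ![1, 0, 0] (by simp)}
    ∧ Sing.ncard = 2 := by
  obtain ⟨hα, hβ, hαβ⟩ :=
    (List.nodup_append (l₁ := [α1, α2, α3, α4]) (l₂ := [β1, β2, β3, β4])).1 hdist
  have hPQ : quartic ![α1, α2, α3, α4] - quartic ![β1, β2, β3, β4] = .C (σ4 - τ4) := by
    subst_vars
    exact quartic_sub_quartic_eq_C hστ1 hστ2 hστ3
  have hσ4τ4 : σ4 - τ4 ≠ 0 := by
    rw [← Polynomial.C_ne_zero, ← hPQ, sub_ne_zero]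
    exact quartic_ne_quartic (i := 0) fun j ↦ hαβ _ (by simp) _ (by fin_cases j <;> simp)
  have hF : dehomogenize F =
      biquadratic (quartic ![α1, α2, α3, α4]) (quartic ![β1, β2, β3, β4]) := by
    simp only [dehomogenize_fin_three, hFf, hf, hφ1, hφ2, biquadratic, aeval_quartic, algebraMap_eq]
  have hSing_eq : Sing = singularPoints F := by
    ext P
    simp [hSing, singularPoints, IsSingularPoint, Fin.forall_fin_succ]
  have hmem (v : Fin 3 → k) (hv : v ≠ 0) :
      Projectivization.mk k v hv ∈ Sing ↔ v 2 = 0 ∧ (v 0 = 0 ∨ v 1 = 0) := by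
    rw [hSing_eq, mk_mem_singularPoints_iff hFhom]
    exact isSingularPoint_iff_of_dehomogenize_eq_biquadratic h2
      (separable_quartic (a := ![α1, α2, α3, α4]) (List.nodup_ofFn.1 hα))
      (separable_quartic (a := ![β1, β2, β3, β4]) (List.nodup_ofFn.1 hβ))
      hσ4τ4 hPQ le_rfl (natDegree_quartic _) hFhom hF v
  have hpair := eq_mk_pair_of_forall_mem_iff hmem
  refine ⟨sub_ne_zero.1 hσ4τ4, fun ξ ↦ by simp [hmem], hpair, ?_⟩
  rw [hpair, Set.ncard_pair mk_zero_one_zero_ne_mk_one_zero_zero]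

/-- Case (II-4): if σ1 = τ1, σ2 = τ2 and σ3 = τ3 (then automatically σ4 ≠ τ4),
then F = 0 has no singular point of the form (x:0:1), and
Sing = {(0:1:0), (1:0:0)} has exactly 2 elements. -/
theorem stmt_18
    {k : Type*} [Field k] [IsAlgClosed k]
    (p : ℕ) [CharP k p] (hp : p = 0 ∨ 5 ≤ p)
    (α1 α2 α3 α4 β1 β2 β3 β4 : k)
    (hdist : ([α1, α2, α3, α4, β1, β2, β3, β4] : List k).Pairwise (· ≠ ·))
    (σ1 σ2 σ3 σ4 τ1 τ2 τ3 τ4 : k)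
    (hσ1 : σ1 = α1 + α2 + α3 + α4)
    (hσ2 : σ2 = α1 * α2 + α1 * α3 + α1 * α4 + α2 * α3 + α2 * α4 + α3 * α4)
    (hσ3 : σ3 = α1 * α2 * α3 + α1 * α2 * α4 + α1 * α3 * α4 + α2 * α3 * α4)
    (hσ4 : σ4 = α1 * α2 * α3 * α4)
    (hτ1 : τ1 = β1 + β2 + β3 + β4)
    (hτ2 : τ2 = β1 * β2 + β1 * β3 + β1 * β4 + β2 * β3 + β2 * β4 + β3 * β4)
    (hτ3 : τ3 = β1 * β2 * β3 + β1 * β2 * β4 + β1 * β3 * β4 + β2 * β3 * β4)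
    (hτ4 : τ4 = β1 * β2 * β3 * β4)
    (φ1 φ2 f : MvPolynomial (Fin 2) k)
    (hφ1 : φ1 = (X 0 - C α1) * (X 0 - C α2) * (X 0 - C α3) * (X 0 - C α4))
    (hφ2 : φ2 = (X 0 - C β1) * (X 0 - C β2) * (X 0 - C β3) * (X 0 - C β4))
    (hf : f = X 1 ^ 4 - C 2 * (φ1 + φ2) * X 1 ^ 2 + (φ1 - φ2) ^ 2)
    (F : MvPolynomial (Fin 3) k)
    (hFhom : F.IsHomogeneous 6)
    (hFf : aeval ![(X 0 : MvPolynomial (Fin 2) k), X 1, 1] F = f)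
    (Sing : Set (Projectivization k (Fin 3 → k)))
    (hSing : ∀ P : Projectivization k (Fin 3 → k),
      P ∈ Sing ↔ (eval P.rep F = 0 ∧
        eval P.rep (pderiv 0 F) = 0 ∧
        eval P.rep (pderiv 1 F) = 0 ∧
        eval P.rep (pderiv 2 F) = 0))
    (hστ1 : σ1 = τ1) (hστ2 : σ2 = τ2) (hστ3 : σ3 = τ3) :
    σ4 ≠ τ4
    ∧ (∀ ξ : k, Projectivization.mk k (![ξ, 0, 1] : Fin 3 → k)
        (by intro hc; simpa using congrFun hc 2) ∉ Sing)
    ∧ Sing = {Projectivization.mk k (![0, 1, 0] : Fin 3 → k)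
                (by intro hc; simpa using congrFun hc 1),
              Projectivization.mk k (![1, 0, 0] : Fin 3 → k)
                (by intro hc; simpa using congrFun hc 0)}
    ∧ Sing.ncard = 2 := by
  exact stmt_18_general (Ring.two_ne_zero (by rw [ringChar.eq k p]; omega)) hdist
    hσ1 hσ2 hσ3 hσ4 hτ1 hτ2 hτ3 hτ4 hφ1 hφ2 hf hFhom hFf hSing hστ1 hστ2 hστ3
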